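/- The 4-arity gate G = |0000⟩ + |1000⟩ + |0100⟩ + |0010⟩ + |0111⟩ + |1011⟩ + |1101⟩ + |1111⟩ (which is invariant under complementation of bitstrings) is not Pfaffian under any change of basis: there do not exist invertible 2×2 complex matrices A₁, A₂, A₃, A₄, a scalar α ∈ ℂ, and a skew-symmetric matrix Ξ ∈ ℂ^{4×4} such that (A₁⊗A₂⊗A₃⊗A₄)G = α·sPf(Ξ). -/

import Mathlib

/-!
Flatten a 4-arity gate to a `4 × 4` matrix `M`, rows indexed by the first two wires and columns by
the last two, and let `J = ε ⊗ ε` with `ε` the standard symplectic form on `ℂ²`. Since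
`Aᵀ ε A = det A • ε` for `2 × 2` matrices, a change of basis conjugates `P = M J Mᵀ J` by `A₁ ⊗ A₂`
and multiplies it by `l = ∏ det Aᵢ`, while `det M` is multiplied by `l²`. So a change of basis also
conjugates the quartic covariant `K = 2 P² - tr P • P - 2 det M` and multiplies it by `l²`; in
particular the conditions `K = 0` and `tr K = 0` do not depend on the basis.

A multiple of a sub-Pfaffian vector vanishes on odd bitstrings, so its `M` has two `2 × 2` diagonal
blocks, whose determinants sum to zero by the Pfaffian expansion. Then the two blocks `Q`, `Q'` of
`P` have the same determinant `-det M`, and Cayley–Hamilton gives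
`K = (tr Q - tr Q') • diag(Q, -Q')`, whose trace is `(tr Q - tr Q')²`. Hence `tr K = 0` forces
`K = 0` for every gate which is Pfaffian in some basis, whereas the given gate has `tr K = 0` and
`K ≠ 0`.
-/

open scoped BigOperators

noncomputable section

/-- Change of basis on an `n`-arity gate: `((A₁⊗…⊗Aₙ)G)(b) = Σ_c (∏ᵢ Aᵢ(bᵢ,cᵢ))·G(c)`. -/
def cobGate {n : ℕ} (A : Fin n → Matrix (Fin 2) (Fin 2) ℂ) (G : (Fin n → Fin 2) → ℂ) :
    (Fin n → Fin 2) → ℂ :=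
  fun b => ∑ c : Fin n → Fin 2, (∏ i, A i (b i) (c i)) * G c

/-- Change of basis on an `n`-arity cogate: `C′(b) = Σ_c C(c)·∏ᵢ Aᵢ⁻¹(cᵢ,bᵢ)`. -/
def cobCogate {n : ℕ} (A : Fin n → Matrix (Fin 2) (Fin 2) ℂ) (C : (Fin n → Fin 2) → ℂ) :
    (Fin n → Fin 2) → ℂ :=
  fun b => ∑ c : Fin n → Fin 2, C c * ∏ i, (A i)⁻¹ (c i) (b i)

/-- The standard basis vector (ket/bra) at the bitstring `v`. -/
def ket {n : ℕ} (v : Fin n → Fin 2) : (Fin n → Fin 2) → ℂ :=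
  fun b => if b = v then 1 else 0

/-- The support of a bitstring. -/
def supp {n : ℕ} (b : Fin n → Fin 2) : Finset (Fin n) :=
  Finset.univ.filter fun i => b i = 1

/-- Fuel-driven Laplace expansion of the Pfaffian of a principal submatrix. -/
def subPfAux {n : ℕ} (Ξ : Matrix (Fin n) (Fin n) ℂ) : ℕ → Finset (Fin n) → ℂ
  | 0, I => if I = ∅ then 1 else 0
  | fuel + 1, I =>
    if hI : I.Nonempty then
      if Odd I.card then 0
      else
        ∑ i ∈ I.erase (I.min' hI),
          (-1 : ℂ) ^ (I.filter fun j => j ≤ i).card * Ξ (I.min' hI) i *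
            subPfAux Ξ fuel ((I.erase (I.min' hI)).erase i)
    else 1

/-- `subPf Ξ I` is the Pfaffian `Pf(Ξ|_I)` of the principal submatrix of `Ξ` on the
rows and columns in `I` (`1` on the empty set, `0` for odd `|I|`). -/
def subPf {n : ℕ} (Ξ : Matrix (Fin n) (Fin n) ℂ) (I : Finset (Fin n)) : ℂ :=
  subPfAux Ξ I.card I

/-- The sub-Pfaffian vector: coordinate `Pf(Ξ|_I)` at the bitstring with support `I`. -/
def sPf {n : ℕ} (Ξ : Matrix (Fin n) (Fin n) ℂ) : (Fin n → Fin 2) → ℂ :=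
  fun b => subPf Ξ (supp b)

/-- The dual sub-Pfaffian vector: coordinate `Pf(Θ|_{Jᶜ})` at the bitstring with support `J`. -/
def sPfStar {n : ℕ} (Θ : Matrix (Fin n) (Fin n) ℂ) : (Fin n → Fin 2) → ℂ :=
  fun b => subPf Θ (supp b)ᶜ

/-- A matrix is skew-symmetric. -/
def IsSkew {n : ℕ} (Ξ : Matrix (Fin n) (Fin n) ℂ) : Prop :=
  ∀ i j, Ξ j i = -Ξ i j

/-- A gate is Pfaffian under the change of basis `M`. -/
def IsPfaffGate {n : ℕ} (M : Fin n → Matrix (Fin 2) (Fin 2) ℂ) (G : (Fin n → Fin 2) → ℂ) : Prop :=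
  ∃ (α : ℂ) (Ξ : Matrix (Fin n) (Fin n) ℂ), IsSkew Ξ ∧ cobGate M G = fun b => α * sPf Ξ b

/-- A cogate is Pfaffian under the change of basis `M`. -/
def IsPfaffCogate {n : ℕ} (M : Fin n → Matrix (Fin 2) (Fin 2) ℂ) (C : (Fin n → Fin 2) → ℂ) : Prop :=
  ∃ (β : ℂ) (Θ : Matrix (Fin n) (Fin n) ℂ), IsSkew Θ ∧ cobCogate M C = fun b => β * sPfStar Θ b

/-- The complement-invariant 4-arity gate of Example 4.7. -/
def exGate : (Fin 4 → Fin 2) → ℂ :=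
  ket ![0, 0, 0, 0] + ket ![1, 0, 0, 0] + ket ![0, 1, 0, 0] + ket ![0, 0, 1, 0]
    + ket ![0, 1, 1, 1] + ket ![1, 0, 1, 1] + ket ![1, 1, 0, 1] + ket ![1, 1, 1, 1]

open Matrix Kronecker

section SubPfaffian

variable {n : ℕ} (Ξ : Matrix (Fin n) (Fin n) ℂ)

lemma subPf_empty : subPf Ξ ∅ = 1 := by simp [subPf, subPfAux]

lemma subPf_of_odd_card {I : Finset (Fin n)} (hI : Odd I.card) : subPf Ξ I = 0 := by
  have hne : I.Nonempty := Finset.card_pos.1 hI.pos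
  obtain ⟨k, hk⟩ := Nat.exists_eq_succ_of_ne_zero hI.pos.ne'
  rw [subPf, hk]
  simp only [subPfAux, dif_pos hne, if_pos hI]

lemma subPfAux_eq_of_card_le {k l : ℕ} {I : Finset (Fin n)} (hk : I.card ≤ k)
    (hl : I.card ≤ l) : subPfAux Ξ k I = subPfAux Ξ l I := by
  induction k generalizing l I with
  | zero =>
    obtain rfl := Finset.card_eq_zero.1 (Nat.le_zero.1 hk)
    cases l <;> simp [subPfAux]
  | succ k ih =>
    cases l with
    | zero =>
      obtain rfl := Finset.card_eq_zero.1 (Nat.le_zero.1 hl)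
      simp [subPfAux]
    | succ l =>
      by_cases hI : I.Nonempty
      · simp only [subPfAux, dif_pos hI]
        congr 1
        refine Finset.sum_congr rfl fun i _ => ?_
        have hcard : ((I.erase (I.min' hI)).erase i).card < I.card :=
          (Finset.card_le_card (Finset.erase_subset i _)).trans_lt
            (Finset.card_erase_lt_of_mem (I.min'_mem hI))
        rw [ih (by lia) (by lia : _ ≤ l)]
      · simp only [subPfAux, dif_neg hI]

lemma subPf_insert {m : Fin n} {I : Finset (Fin n)} (hm : ∀ i ∈ I, m < i) (hI : Odd I.card) :
    subPf Ξ (insert m I) =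
      ∑ i ∈ I, (-1) ^ (I.filter (· < i)).card * Ξ m i * subPf Ξ (I.erase i) := by
  have hmI : m ∉ I := fun h => (hm m h).false
  have hmin (hne : (insert m I).Nonempty) : (insert m I).min' hne = m :=
    le_antisymm (Finset.min'_le _ _ (Finset.mem_insert_self m I))
      (Finset.le_min' _ _ _ fun i hi =>
        (Finset.mem_insert.1 hi).elim (fun h => h.ge) fun h => (hm i h).le)
  have hodd : ¬ Odd (I.card + 1) := Nat.not_odd_iff_even.2 hI.add_one
  rw [subPf, Finset.card_insert_of_notMem hmI, subPfAux, dif_pos (Finset.insert_nonempty m I),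
    Finset.card_insert_of_notMem hmI, if_neg hodd, hmin, Finset.erase_insert hmI]
  refine Finset.sum_congr rfl fun i hi => ?_
  have hsign : ((insert m I).filter (· ≤ i)).card = (I.filter (· < i)).card + 2 := by
    have : (insert m I).filter (· ≤ i) = insert m (insert i (I.filter (· < i))) := by
      ext j
      have := hm i hi
      grind
    rw [this, Finset.card_insert_of_notMem, Finset.card_insert_of_notMem] <;> grind
  rw [hsign, pow_add, neg_one_sq, mul_one, subPf,
    subPfAux_eq_of_card_le Ξ (Finset.card_le_card (Finset.erase_subset i I)) le_rfl]

lemma subPf_pair {i j : Fin n} (hij : i < j) : subPf Ξ {i, j} = Ξ i j := by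
  rw [subPf_insert Ξ (by simpa using hij) (by simp)]
  simp [Finset.filter_singleton, subPf_empty]

lemma subPf_four {i j k l : Fin n} (hij : i < j) (hjk : j < k) (hkl : k < l) :
    subPf Ξ {i, j, k, l} = Ξ i j * Ξ k l - Ξ i k * Ξ j l + Ξ i l * Ξ j k := by
  have hcard : ({j, k, l} : Finset (Fin n)).card = 3 :=
    Finset.card_eq_three.2 ⟨j, k, l, hjk.ne, (hjk.trans hkl).ne, hkl.ne, rfl⟩
  have hj : ({j, k, l} : Finset (Fin n)).erase j = {k, l} := by grind
  have hk : ({j, k, l} : Finset (Fin n)).erase k = {j, l} := by grind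
  have hl : ({j, k, l} : Finset (Fin n)).erase l = {j, k} := by grind
  have hlt_j : ({j, k, l} : Finset (Fin n)).filter (· < j) = ∅ := by grind
  have hlt_k : ({j, k, l} : Finset (Fin n)).filter (· < k) = {j} := by grind
  have hlt_l : ({j, k, l} : Finset (Fin n)).filter (· < l) = {j, k} := by grind
  rw [subPf_insert Ξ (by grind) (hcard ▸ by decide), Finset.sum_insert (by grind),
    Finset.sum_pair hkl.ne, hj, hk, hl, hlt_j, hlt_k, hlt_l, subPf_pair Ξ hkl,
    subPf_pair Ξ (hjk.trans hkl), subPf_pair Ξ hjk, Finset.card_empty, Finset.card_singleton,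
    Finset.card_pair hjk.ne]
  ring

end SubPfaffian

section MatrixIdentities

lemma trace_fromBlocks {l m R : Type*} [Fintype l] [Fintype m] [AddCommMonoid R]
    (A : Matrix l l R) (B : Matrix l m R) (C : Matrix m l R) (D : Matrix m m R) :
    (fromBlocks A B C D).trace = A.trace + D.trace := by
  simp [trace]

lemma mul_self_fin_two {R : Type*} [CommRing R] (Q : Matrix (Fin 2) (Fin 2) R) :
    Q * Q = Q.trace • Q - Q.det • 1 := by
  ext i j
  fin_cases i <;> fin_cases j <;>
    simp [Matrix.mul_apply, Fin.sum_univ_two, trace_fin_two, det_fin_two] <;> ring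

end MatrixIdentities

section QuarticCovariant

variable {n R : Type*} [Fintype n] [CommRing R]

/-- The product of `M` with its adjoint `J * Mᵀ * J` for the bilinear form with Gram matrix `J`,
where `J` is meant to be symmetric with `J * J = 1`. A change of basis of a gate conjugates this
product, up to a scalar. -/
def adjointProduct (J M : Matrix n n R) : Matrix n n R := M * J * Mᵀ * J

lemma adjointProduct_mul_mul_transpose [DecidableEq n] {J U V : Matrix n n R} {u v : R}
    (hU : Uᵀ * J * U = u • J) (hV : Vᵀ * J * V = v • J) (hUdet : IsUnit U.det)
    (M : Matrix n n R) :
    adjointProduct J (U * M * Vᵀ) = (u * v) • (U * adjointProduct J M * U⁻¹) := by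
  have hUJ : Uᵀ * J = u • (J * U⁻¹) := by
    rw [← smul_mul, ← hU, mul_nonsing_inv_cancel_right _ _ hUdet]
  calc adjointProduct J (U * M * Vᵀ)
      = U * M * (Vᵀ * J * V) * Mᵀ * (Uᵀ * J) := by
        simp only [adjointProduct, transpose_mul, transpose_transpose, Matrix.mul_assoc]
    _ = (u * v) • (U * adjointProduct J M * U⁻¹) := by
        simp only [adjointProduct, hV, hUJ, Matrix.mul_smul, Matrix.smul_mul, smul_smul,
          Matrix.mul_assoc]

variable [DecidableEq n]

/-- With `P = adjointProduct J M`, the matrix `2 P² - tr P • P - 2 det M`. Its entries are quartic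
in those of `M` when `M` is `4 × 4`; it detects the gates which are not Pfaffian in any basis. -/
def quarticCovariant (J M : Matrix n n R) : Matrix n n R :=
  (2 : R) • (adjointProduct J M * adjointProduct J M)
    - (adjointProduct J M).trace • adjointProduct J M - (2 * M.det) • 1

lemma quarticCovariant_mul_mul_transpose {J U V : Matrix n n R} {u v : R}
    (hU : Uᵀ * J * U = u • J) (hV : Vᵀ * J * V = v • J) (hUdet : U.det = u ^ 2)
    (hVdet : V.det = v ^ 2) (hu : IsUnit u) (M : Matrix n n R) :
    quarticCovariant J (U * M * Vᵀ) = (u * v) ^ 2 • (U * quarticCovariant J M * U⁻¹) := by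
  have hUunit : IsUnit U.det := hUdet ▸ hu.pow 2
  have hsq (X : Matrix n n R) : U * X * U⁻¹ * (U * X * U⁻¹) = U * (X * X) * U⁻¹ := by
    simp only [Matrix.mul_assoc, nonsing_inv_mul_cancel_left _ _ hUunit]
  have hdet : (U * M * Vᵀ).det = (u * v) ^ 2 * M.det := by
    rw [det_mul, det_mul, det_transpose, hUdet, hVdet]
    ring
  simp only [quarticCovariant, adjointProduct_mul_mul_transpose hU hV hUunit, hdet, trace_smul,
    trace_conj ((isUnit_iff_isUnit_det U).2 hUunit), Matrix.smul_mul, Matrix.mul_smul, hsq,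
    Matrix.mul_sub, Matrix.sub_mul, Matrix.mul_one, mul_nonsing_inv _ hUunit, smul_sub]
  module

section Similitude

variable {J U V : Matrix n n R} {u v : R} (hU : Uᵀ * J * U = u • J) (hV : Vᵀ * J * V = v • J)
  (hUdet : U.det = u ^ 2) (hVdet : V.det = v ^ 2) (hu : IsUnit u)

include hU hV hUdet hVdet hu

lemma quarticCovariant_mul_mul_transpose_eq_zero_iff (hv : IsUnit v) {M : Matrix n n R} :
    quarticCovariant J (U * M * Vᵀ) = 0 ↔ quarticCovariant J M = 0 := by
  have hUunit : IsUnit U := (isUnit_iff_isUnit_det U).2 (hUdet ▸ hu.pow 2)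
  rw [quarticCovariant_mul_mul_transpose hU hV hUdet hVdet hu, ((hu.mul hv).pow 2).smul_eq_zero,
    (isUnit_nonsing_inv_iff.2 hUunit).mul_left_eq_zero, hUunit.mul_right_eq_zero]

lemma trace_quarticCovariant_mul_mul_transpose_eq_zero_iff (hv : IsUnit v) {M : Matrix n n R} :
    (quarticCovariant J (U * M * Vᵀ)).trace = 0 ↔ (quarticCovariant J M).trace = 0 := by
  have hUunit : IsUnit U := (isUnit_iff_isUnit_det U).2 (hUdet ▸ hu.pow 2)
  rw [quarticCovariant_mul_mul_transpose hU hV hUdet hVdet hu, trace_smul, trace_conj hUunit,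
    ((hu.mul hv).pow 2).smul_eq_zero]

end Similitude

lemma quarticCovariant_fromBlocks {F F' B C : Matrix (Fin 2) (Fin 2) R} (hF : F.det ^ 2 = 1)
    (hF' : F'.det ^ 2 = 1) (hBC : B.det + C.det = 0) :
    quarticCovariant (fromBlocks F 0 0 F') (fromBlocks B 0 0 C) =
      ((adjointProduct F B).trace - (adjointProduct F' C).trace) •
        fromBlocks (adjointProduct F B) 0 0 (-adjointProduct F' C) := by
  have hprod : adjointProduct (fromBlocks F 0 0 F') (fromBlocks B 0 0 C) =
      fromBlocks (adjointProduct F B) 0 0 (adjointProduct F' C) := by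
    simp [adjointProduct, fromBlocks_transpose, fromBlocks_multiply]
  have hC : C.det = -B.det := by linear_combination hBC
  have hQ : (adjointProduct F B).det = B.det ^ 2 := by
    simp only [adjointProduct, det_mul, det_transpose]
    linear_combination B.det ^ 2 * hF
  have hQ' : (adjointProduct F' C).det = B.det ^ 2 := by
    simp only [adjointProduct, det_mul, det_transpose, hC]
    linear_combination B.det ^ 2 * hF'
  rw [quarticCovariant, hprod, det_fromBlocks_zero₂₁, hC, ← fromBlocks_one, trace_fromBlocks,
    fromBlocks_multiply]
  simp only [Matrix.mul_zero, Matrix.zero_mul, add_zero, zero_add, mul_self_fin_two, hQ, hQ',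
    sub_eq_add_neg, fromBlocks_smul, fromBlocks_neg, fromBlocks_add, smul_zero, neg_zero]
  congr 1 <;> module

lemma quarticCovariant_fromBlocks_eq_zero [IsReduced R] {F F' B C : Matrix (Fin 2) (Fin 2) R}
    (hF : F.det ^ 2 = 1) (hF' : F'.det ^ 2 = 1) (hBC : B.det + C.det = 0)
    (htr : (quarticCovariant (fromBlocks F 0 0 F') (fromBlocks B 0 0 C)).trace = 0) :
    quarticCovariant (fromBlocks F 0 0 F') (fromBlocks B 0 0 C) = 0 := by
  rw [quarticCovariant_fromBlocks hF hF' hBC] at htr ⊢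
  rw [trace_smul, trace_fromBlocks, trace_neg, ← sub_eq_add_neg, smul_eq_mul, ← sq,
    pow_eq_zero_iff two_ne_zero] at htr
  rw [htr, zero_smul]

end QuarticCovariant

section ParityBasis

/-- Pairs of bits listed by parity: `inl` runs through `00, 11` and `inr` through `01, 10`. In this
order the flattening of a gate supported on even bitstrings is block diagonal. -/
def parityEquiv : Fin 2 ⊕ Fin 2 ≃ Fin 2 × Fin 2 where
  toFun := Sum.elim (fun i => (i, i)) fun i => (i, i.rev)
  invFun p := if p.1 = p.2 then Sum.inl p.1 else Sum.inr p.1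
  left_inv := by decide
  right_inv := by decide

/-- The flattening of a 4-arity gate to a matrix with rows indexed by the first two wires and
columns by the last two, both in the order of `parityEquiv`. -/
def parityFlatten {α : Type*} (G : (Fin 4 → Fin 2) → α) :
    Matrix (Fin 2 ⊕ Fin 2) (Fin 2 ⊕ Fin 2) α :=
  of fun r c => G ![(parityEquiv r).1, (parityEquiv r).2, (parityEquiv c).1, (parityEquiv c).2]

lemma parityFlatten_eq_fromBlocks {α : Type*} (G : (Fin 4 → Fin 2) → α) :
    parityFlatten G = fromBlocks
      !![G ![0, 0, 0, 0], G ![0, 0, 1, 1]; G ![1, 1, 0, 0], G ![1, 1, 1, 1]]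
      !![G ![0, 0, 0, 1], G ![0, 0, 1, 0]; G ![1, 1, 0, 1], G ![1, 1, 1, 0]]
      !![G ![0, 1, 0, 0], G ![0, 1, 1, 1]; G ![1, 0, 0, 0], G ![1, 0, 1, 1]]
      !![G ![0, 1, 0, 1], G ![0, 1, 1, 0]; G ![1, 0, 0, 1], G ![1, 0, 1, 0]] := by
  ext (i | i) (j | j) <;> fin_cases i <;> fin_cases j <;> rfl

variable {R : Type*} [CommRing R]

/-- The Kronecker product of two `2 × 2` matrices in the order of `parityEquiv`. -/
def parityKronecker (A B : Matrix (Fin 2) (Fin 2) R) :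
    Matrix (Fin 2 ⊕ Fin 2) (Fin 2 ⊕ Fin 2) R :=
  (A ⊗ₖ B).submatrix parityEquiv parityEquiv

lemma det_parityKronecker (A B : Matrix (Fin 2) (Fin 2) R) :
    (parityKronecker A B).det = (A.det * B.det) ^ 2 := by
  rw [parityKronecker, det_submatrix_equiv_self, det_kronecker, Fintype.card_fin, mul_pow]

variable (R) in
/-- The standard symplectic form `ε` on `R²`. -/
def sympForm : Matrix (Fin 2) (Fin 2) R := !![0, 1; -1, 0]

lemma transpose_mul_sympForm_mul (A : Matrix (Fin 2) (Fin 2) R) :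
    Aᵀ * sympForm R * A = A.det • sympForm R := by
  ext i j
  fin_cases i <;> fin_cases j <;>
    simp [sympForm, Matrix.mul_apply, Fin.sum_univ_two, det_fin_two] <;> ring

variable (R) in
/-- The symmetric bilinear form `ε ⊗ ε` on `R² ⊗ R²`, in the order of `parityEquiv`. -/
def parityForm : Matrix (Fin 2 ⊕ Fin 2) (Fin 2 ⊕ Fin 2) R :=
  parityKronecker (sympForm R) (sympForm R)

lemma parityForm_eq_fromBlocks :
    parityForm R = fromBlocks !![0, 1; 1, 0] 0 0 (-!![0, 1; 1, 0]) := by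
  ext (i | i) (j | j) <;> fin_cases i <;> fin_cases j <;>
    simp [parityForm, parityKronecker, parityEquiv, sympForm]

lemma transpose_mul_parityForm_mul (A B : Matrix (Fin 2) (Fin 2) R) :
    (parityKronecker A B)ᵀ * parityForm R * parityKronecker A B =
      (A.det * B.det) • parityForm R := by
  simp only [parityForm, parityKronecker, transpose_submatrix, submatrix_mul_equiv,
    ← kroneckerMap_transpose, ← mul_kronecker_mul, transpose_mul_sympForm_mul, smul_kronecker,
    kronecker_smul, smul_smul, mul_comm B.det]
  rfl

end ParityBasis

section Flattening

lemma sum_fin_four_arrow {α M : Type*} [Fintype α] [AddCommMonoid M] (f : (Fin 4 → α) → M) :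
    ∑ c, f c = ∑ r : α × α, ∑ s : α × α, f ![r.1, r.2, s.1, s.2] := by
  let e : (Fin 4 → α) ≃ (α × α) × α × α :=
    { toFun c := ((c 0, c 1), (c 2, c 3))
      invFun p := ![p.1.1, p.1.2, p.2.1, p.2.2]
      left_inv c := by
        ext i
        fin_cases i <;> rfl
      right_inv _ := rfl }
  rw [← e.symm.sum_comp, Fintype.sum_prod_type]
  rfl

lemma parityFlatten_cobGate (A : Fin 4 → Matrix (Fin 2) (Fin 2) ℂ) (G : (Fin 4 → Fin 2) → ℂ) :
    parityFlatten (cobGate A G) =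
      parityKronecker (A 0) (A 1) * parityFlatten G * (parityKronecker (A 2) (A 3))ᵀ := by
  ext r c
  simp only [parityFlatten, parityKronecker, cobGate, sum_fin_four_arrow, of_apply,
    Matrix.mul_apply, transpose_apply, submatrix_apply, kroneckerMap_apply, Finset.sum_mul,
    ← parityEquiv.sum_comp, Fin.prod_univ_four]
  rw [Finset.sum_comm]
  refine Finset.sum_congr rfl fun s _ => Finset.sum_congr rfl fun t _ => ?_
  simp only [cons_val]
  ring

lemma parityFlatten_sPf (Ξ : Matrix (Fin 4) (Fin 4) ℂ) :
    parityFlatten (sPf Ξ) = fromBlocks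
      !![1, Ξ 2 3; Ξ 0 1, Ξ 0 1 * Ξ 2 3 - Ξ 0 2 * Ξ 1 3 + Ξ 0 3 * Ξ 1 2] 0 0
      !![Ξ 1 3, Ξ 1 2; Ξ 0 3, Ξ 0 2] := by
  have sPf_odd (b : Fin 4 → Fin 2) (hb : Odd (supp b).card) : sPf Ξ b = 0 :=
    subPf_of_odd_card Ξ hb
  have sPf_pair (b : Fin 4 → Fin 2) (i j : Fin 4) (hij : i < j) (hb : supp b = {i, j}) :
      sPf Ξ b = Ξ i j := by
    rw [sPf, hb, subPf_pair Ξ hij]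
  have sPf_zero : sPf Ξ ![0, 0, 0, 0] = 1 := by
    rw [sPf, show supp ![0, 0, 0, 0] = ∅ by decide, subPf_empty]
  have sPf_one : sPf Ξ ![1, 1, 1, 1] = Ξ 0 1 * Ξ 2 3 - Ξ 0 2 * Ξ 1 3 + Ξ 0 3 * Ξ 1 2 := by
    rw [sPf, show supp ![1, 1, 1, 1] = {0, 1, 2, 3} by decide,
      subPf_four Ξ (by decide) (by decide) (by decide)]
  rw [parityFlatten_eq_fromBlocks, sPf_zero, sPf_one,
    sPf_pair ![0, 0, 1, 1] 2 3 (by decide) (by decide),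
    sPf_pair ![1, 1, 0, 0] 0 1 (by decide) (by decide),
    sPf_pair ![0, 1, 0, 1] 1 3 (by decide) (by decide),
    sPf_pair ![0, 1, 1, 0] 1 2 (by decide) (by decide),
    sPf_pair ![1, 0, 0, 1] 0 3 (by decide) (by decide),
    sPf_pair ![1, 0, 1, 0] 0 2 (by decide) (by decide)]
  congr 1 <;> ext i j <;> fin_cases i <;> fin_cases j <;> exact sPf_odd _ (by decide)

end Flattening

section ChangeOfBasis

variable {A : Fin 4 → Matrix (Fin 2) (Fin 2) ℂ} {G : (Fin 4 → Fin 2) → ℂ}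
  (hA : ∀ i, IsUnit (A i).det)

include hA

lemma quarticCovariant_cobGate_eq_zero_iff :
    quarticCovariant (parityForm ℂ) (parityFlatten (cobGate A G)) = 0 ↔
      quarticCovariant (parityForm ℂ) (parityFlatten G) = 0 := by
  rw [parityFlatten_cobGate]
  exact quarticCovariant_mul_mul_transpose_eq_zero_iff (transpose_mul_parityForm_mul _ _)
    (transpose_mul_parityForm_mul _ _) (det_parityKronecker _ _) (det_parityKronecker _ _)
    ((hA 0).mul (hA 1)) ((hA 2).mul (hA 3))

lemma trace_quarticCovariant_cobGate_eq_zero_iff :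
    (quarticCovariant (parityForm ℂ) (parityFlatten (cobGate A G))).trace = 0 ↔
      (quarticCovariant (parityForm ℂ) (parityFlatten G)).trace = 0 := by
  rw [parityFlatten_cobGate]
  exact trace_quarticCovariant_mul_mul_transpose_eq_zero_iff (transpose_mul_parityForm_mul _ _)
    (transpose_mul_parityForm_mul _ _) (det_parityKronecker _ _) (det_parityKronecker _ _)
    ((hA 0).mul (hA 1)) ((hA 2).mul (hA 3))

theorem IsPfaffGate.quarticCovariant_eq_zero (hG : IsPfaffGate A G)
    (htr : (quarticCovariant (parityForm ℂ) (parityFlatten G)).trace = 0) :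
    quarticCovariant (parityForm ℂ) (parityFlatten G) = 0 := by
  obtain ⟨α, Ξ, -, h⟩ := hG
  have hblocks : parityFlatten (cobGate A G) = fromBlocks
      (α • !![1, Ξ 2 3; Ξ 0 1, Ξ 0 1 * Ξ 2 3 - Ξ 0 2 * Ξ 1 3 + Ξ 0 3 * Ξ 1 2]) 0 0
      (α • !![Ξ 1 3, Ξ 1 2; Ξ 0 3, Ξ 0 2]) := by
    rw [h, show (parityFlatten fun b => α * sPf Ξ b) = α • parityFlatten (sPf Ξ) from rfl,
      parityFlatten_sPf, fromBlocks_smul, smul_zero]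
  rw [← trace_quarticCovariant_cobGate_eq_zero_iff hA, hblocks, parityForm_eq_fromBlocks] at htr
  rw [← quarticCovariant_cobGate_eq_zero_iff hA, hblocks, parityForm_eq_fromBlocks]
  refine quarticCovariant_fromBlocks_eq_zero ?_ ?_ ?_ htr
  · simp [det_fin_two]
  · simp [det_fin_two]
  · -- The matchgate identity: the block determinants add up to `Pf Ξ` minus its own expansion.
    simp only [det_smul, det_fin_two_of]
    ring

end ChangeOfBasis

section ExampleGate

lemma parityFlatten_exGate :
    parityFlatten exGate = fromBlocks 1 !![0, 1; 1, 0] !![1, 1; 1, 1] 0 := by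
  rw [parityFlatten_eq_fromBlocks]
  congr 1 <;> ext i j <;> fin_cases i <;> fin_cases j <;> simp [exGate, ket]

lemma quarticCovariant_exGate :
    quarticCovariant (parityForm ℂ) (parityFlatten exGate) =
      (4 : ℂ) •
        fromBlocks (-!![1, 1; 1, 1]) !![1, 1; 1, 1] (-!![1, 1; 1, 1]) !![1, 1; 1, 1] := by
  have hP : adjointProduct (parityForm ℂ) (parityFlatten exGate) =
      fromBlocks 0 (-!![1, 1; 1, 1]) !![1, 1; 1, 1] (-!![2, 2; 2, 2]) := by
    rw [adjointProduct, parityForm_eq_fromBlocks, parityFlatten_exGate]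
    simp only [fromBlocks_transpose, fromBlocks_multiply]
    congr 1 <;> ext i j <;> fin_cases i <;> fin_cases j <;>
      norm_num [-cons_mul, Matrix.mul_apply, Fin.sum_univ_two]
  have hdet : (parityFlatten exGate).det = 0 := by
    refine det_zero_of_row_eq (i := Sum.inr 0) (j := Sum.inr 1) (by decide) ?_
    rw [parityFlatten_exGate]
    ext (j | j) <;> fin_cases j <;> rfl
  have htr : (adjointProduct (parityForm ℂ) (parityFlatten exGate)).trace = -4 := by
    rw [hP, trace_fromBlocks]
    norm_num [trace_fin_two]
  rw [quarticCovariant, hdet, htr, hP, fromBlocks_multiply]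
  ext (i | i) (j | j) <;> fin_cases i <;> fin_cases j <;> norm_num

end ExampleGate

/-- Example 4.7: not every complement-invariant gate is Pfaffian. -/
theorem stmt9 :
    ¬ ∃ (A1 A2 A3 A4 : Matrix (Fin 2) (Fin 2) ℂ) (α : ℂ) (Ξ : Matrix (Fin 4) (Fin 4) ℂ),
      IsUnit A1.det ∧ IsUnit A2.det ∧ IsUnit A3.det ∧ IsUnit A4.det ∧ IsSkew Ξ ∧
      cobGate ![A1, A2, A3, A4] exGate = fun b => α * sPf Ξ b := by
  rintro ⟨A1, A2, A3, A4, α, Ξ, h1, h2, h3, h4, hΞ, h⟩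
  have hA : ∀ i, IsUnit (![A1, A2, A3, A4] i).det := by
    simp [Fin.forall_fin_succ, h1.ne_zero, h2.ne_zero, h3.ne_zero, h4.ne_zero]
  have hPf : IsPfaffGate ![A1, A2, A3, A4] exGate := ⟨α, Ξ, hΞ, h⟩
  have hK := hPf.quarticCovariant_eq_zero hA
  rw [quarticCovariant_exGate] at hK
  have hentry := congrFun₂ (hK (by simp [trace_fromBlocks])) (Sum.inl 0) (Sum.inl 0)
  simp at hentry
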